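/- Let u > 0, β > 0, c ≥ 0 and κ ∈ ℝ. Then ∫_u^∞ x^{κ−1} · e^{−β·x} · e^{−c/x} dx = Σ_{l=0}^{∞} ((−1)^l · c^l / l!) · β^{l−κ} · Γ(κ − l, β·u), where Γ(s, v) := ∫_v^∞ t^{s−1} e^{−t} dt is the upper incomplete gamma function, and the series on the right converges absolutely. -/

import Mathlib

/-!
For `x > u` the Taylor series `e^(-c/x) = ∑ (-c/x)^l / l!` is dominated termwise by
`∑ (c/u)^l / l! = e^(c/u)`, uniformly in `x`. Since `x^(κ-1) e^(-βx)` is integrable on `(u, ∞)` for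
every real `κ` (the singularity at `0` is excluded and the exponential beats any power at infinity),
dominated convergence for series gives a `HasSum` for the integrals. The substitution `t = βx`
identifies each integrated term with an incomplete gamma value. Absolute convergence is automatic,
as unconditional and absolute summability coincide in `ℝ`.
-/

open MeasureTheory

/-- The upper incomplete gamma function `Γ(s, v) = ∫_v^∞ t^(s-1) e^(-t) dt`. -/
noncomputable def upperGamma (s v : ℝ) : ℝ :=
  ∫ t in Set.Ioi v, t ^ (s - 1) * Real.exp (-t)

lemma integrableOn_rpow_mul_exp (u β κ : ℝ) (hu : 0 < u) (hβ : 0 < β) :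
    IntegrableOn (fun x : ℝ => x ^ (κ - 1) * Real.exp (-β * x)) (Set.Ioi u) := by
  refine integrable_of_isBigO_exp_neg (b := β / 2) (by positivity) ?_ ?_
  · refine ContinuousOn.mul (fun x hx => ?_) (by fun_prop)
    exact (Real.continuousAt_rpow_const x _
      (Or.inl (hu.trans_le hx).ne')).continuousWithinAt
  · have h := (isLittleO_rpow_exp_pos_mul_atTop (κ - 1) (half_pos hβ)).isBigO.mul
      (Asymptotics.isBigO_refl (fun x : ℝ => Real.exp (-β * x)) Filter.atTop)
    refine h.congr_right fun x => ?_
    rw [← Real.exp_add]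
    congr 1
    ring

/-- The `l`-th Taylor term integrates to an incomplete gamma value, by substituting `t = βx`. -/
lemma integral_taylor_term (u β c κ : ℝ) (hu : 0 < u) (hβ : 0 < β) (l : ℕ) :
    (∫ x in Set.Ioi u, x ^ (κ - 1) * Real.exp (-β * x) * ((-c / x) ^ l / (Nat.factorial l))) =
      ((-1 : ℝ) ^ l * c ^ l / (Nat.factorial l)) * β ^ ((l : ℝ) - κ) *
        upperGamma (κ - l) (β * u) := by
  have hsub := integral_comp_mul_left_Ioi
    (fun t : ℝ => t ^ (κ - l - 1) * Real.exp (-t)) u hβ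
  have hΓ : upperGamma (κ - l) (β * u) =
      β * ∫ x in Set.Ioi u, (β * x) ^ (κ - l - 1) * Real.exp (-(β * x)) := by
    rw [hsub, smul_eq_mul, mul_inv_cancel_left₀ hβ.ne', upperGamma]
  rw [hΓ, ← integral_const_mul, ← integral_const_mul]
  refine setIntegral_congr_fun measurableSet_Ioi fun x hx => ?_
  have hx0 : 0 < x := hu.trans hx
  have hβpow : β ^ ((l : ℝ) - κ) * β * β ^ (κ - l - 1) = 1 := by
    rw [← Real.rpow_add_one hβ.ne', ← Real.rpow_add hβ]
    simp
  have hxpow : x ^ (κ - l - 1) = x ^ (κ - 1) / x ^ l := by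
    rw [← Real.rpow_natCast x l, ← Real.rpow_sub hx0]
    congr 1
    ring
  rw [Real.mul_rpow hβ.le hx0.le, hxpow, div_pow, neg_pow c, neg_mul]
  linear_combination (-(x ^ (κ - 1) * Real.exp (-(β * x)) *
    ((-1) ^ l * c ^ l / x ^ l / (Nat.factorial l)))) * hβpow

/-- The Taylor terms, dominated by those of `e^(c/u)`, can be integrated one by one. -/
lemma hasSum_integral_taylor (u β c κ : ℝ) (hu : 0 < u) (hβ : 0 < β) (hc : 0 ≤ c) :
    HasSum (fun l : ℕ => ∫ x in Set.Ioi u,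
        x ^ (κ - 1) * Real.exp (-β * x) * ((-c / x) ^ l / (Nat.factorial l)))
      (∫ x in Set.Ioi u, x ^ (κ - 1) * Real.exp (-β * x) * Real.exp (-c / x)) := by
  have hexp (y : ℝ) : HasSum (fun l : ℕ => y ^ l / (Nat.factorial l)) (Real.exp y) := by
    rw [Real.exp_eq_exp_ℝ]
    exact NormedSpace.expSeries_div_hasSum_exp y
  refine hasSum_integral_of_dominated_convergence
    (fun l x => x ^ (κ - 1) * Real.exp (-β * x) * ((c / u) ^ l / (Nat.factorial l)))
    (fun l => by fun_prop) (fun l => ?_) ?_ ?_ ?_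
  · filter_upwards [ae_restrict_mem measurableSet_Ioi] with x hx
    have hux : u < x := hx
    have hx0 : 0 < x := hu.trans hux
    have hnorm : ‖x ^ (κ - 1) * Real.exp (-β * x) * ((-c / x) ^ l / (Nat.factorial l))‖ =
        x ^ (κ - 1) * Real.exp (-β * x) * ((c / x) ^ l / (Nat.factorial l)) := by
      rw [norm_mul, Real.norm_of_nonneg (by positivity), norm_div, norm_pow, norm_div, norm_neg,
        Real.norm_of_nonneg hc, Real.norm_of_nonneg hx0.le, Real.norm_natCast]
    rw [hnorm]
    gcongr
  · exact Filter.Eventually.of_forall fun x => (hexp (c / u)).summable.mul_left _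
  · simp_rw [tsum_mul_left]
    exact (integrableOn_rpow_mul_exp u β κ hu hβ).mul_const _
  · exact Filter.Eventually.of_forall fun x => (hexp (-c / x)).mul_left _

/-- Term-by-term integration of the Taylor expansion of `e^(-c/x)`:
`∫_u^∞ x^(κ-1) e^(-βx) e^(-c/x) dx = Σ_l ((-1)^l c^l / l!) β^(l-κ) Γ(κ-l, βu)`,
with the series converging absolutely. -/
theorem stmt9 (u β c κ : ℝ) (hu : 0 < u) (hβ : 0 < β) (hc : 0 ≤ c) :
    Summable (fun l : ℕ =>
      |((-1 : ℝ) ^ l * c ^ l / (Nat.factorial l)) * β ^ ((l : ℝ) - κ) *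
        upperGamma (κ - l) (β * u)|) ∧
    (∫ x in Set.Ioi u, x ^ (κ - 1) * Real.exp (-β * x) * Real.exp (-c / x)) =
      ∑' l : ℕ, ((-1 : ℝ) ^ l * c ^ l / (Nat.factorial l)) * β ^ ((l : ℝ) - κ) *
        upperGamma (κ - l) (β * u) := by
  have h := hasSum_integral_taylor u β c κ hu hβ hc
  simp_rw [integral_taylor_term u β c κ hu hβ] at h
  exact ⟨h.summable.abs, h.tsum_eq.symm⟩
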